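/- Let (s_n)_{n ≥ 0} be a sequence of integers such that: there is a constant C with s_n ≤ C·n for all n ≥ 1, and the quantity (s_n − log n / log log n) · (log log n)² / (log n · log log log n) tends to infinity as n → ∞. Then there exists a non-empty family 𝓕 of finite graphs, each having at least one edge, such that sat(n,𝓕) = s_n for all sufficiently large n. -/

import Mathlib

open SimpleGraph Filter Topology

/-- `H` (on `β`) is contained in `G` (on `α`): `G` has a subgraph isomorphic to `H`. -/
def Contains {α β : Type*} (G : SimpleGraph α) (H : SimpleGraph β) : Prop :=
  ∃ f : β ↪ α, ∀ a b : β, H.Adj a b → G.Adj (f a) (f b)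

/-- A family of finite graphs, each given on a vertex set `Fin n`. -/
abbrev GraphFam := Set ((n : ℕ) × SimpleGraph (Fin n))

/-- `G` is `𝓕`-saturated: `G` contains no member of `𝓕`, but adding any missing edge to `G`
creates a member of `𝓕`. -/
def FamSaturated (𝓕 : GraphFam) {α : Type*} (G : SimpleGraph α) : Prop :=
  (∀ F ∈ 𝓕, ¬ Contains G F.2) ∧
    ∀ u v : α, u ≠ v → ¬ G.Adj u v →
      ∃ F ∈ 𝓕, Contains (G ⊔ SimpleGraph.fromEdgeSet {s(u, v)}) F.2

/-- `sat n 𝓕` is the minimum number of edges in an `𝓕`-saturated graph on `n` vertices. -/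
noncomputable def sat (n : ℕ) (𝓕 : GraphFam) : ℕ :=
  sInf {m | ∃ G : SimpleGraph (Fin n), FamSaturated 𝓕 G ∧ Nat.card G.edgeSet = m}

theorem Contains.trans {α β γ : Type*} {G : SimpleGraph α} {H : SimpleGraph β}
    {K : SimpleGraph γ} (h₁ : Contains G H) (h₂ : Contains H K) : Contains G K := by
  obtain ⟨f, hf⟩ := h₁
  obtain ⟨g, hg⟩ := h₂
  exact ⟨g.trans f, fun a b h => hf _ _ (hg _ _ h)⟩

theorem Contains.of_le {α : Type*} {G H : SimpleGraph α} (h : H ≤ G) : Contains G H :=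
  ⟨Function.Embedding.refl α, fun _ _ hab => h hab⟩

theorem Contains.card_vertices_le {n k : ℕ} {G : SimpleGraph (Fin n)} {H : SimpleGraph (Fin k)}
    (h : Contains G H) : k ≤ n := by
  obtain ⟨f, -⟩ := h
  simpa using Fintype.card_le_of_embedding f

theorem Contains.map_le {α β : Type*} {G : SimpleGraph α} {H : SimpleGraph β} {f : β ↪ α}
    (hf : ∀ a b, H.Adj a b → G.Adj (f a) (f b)) : H.map f ≤ G := by
  rw [SimpleGraph.map_le_iff_le_comap]
  exact fun a b h => hf a b h

theorem card_edgeSet_map {α β : Type*} (G : SimpleGraph α) (f : α ↪ β) :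
    Nat.card (G.map f).edgeSet = Nat.card G.edgeSet := by
  rw [SimpleGraph.edgeSet_map]
  exact Nat.card_image_of_injective f.sym2Map.injective _

theorem card_edgeSet_mono {α : Type*} [Finite α] {G H : SimpleGraph α} (h : G ≤ H) :
    Nat.card G.edgeSet ≤ Nat.card H.edgeSet :=
  Nat.card_mono (Set.toFinite _) (SimpleGraph.edgeSet_mono h)

theorem eq_of_le_of_card_edgeSet_le {α : Type*} [Finite α] {G H : SimpleGraph α} (h : G ≤ H)
    (hc : Nat.card H.edgeSet ≤ Nat.card G.edgeSet) : G = H := by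
  rw [← SimpleGraph.edgeSet_inj]
  exact Set.eq_of_subset_of_ncard_le (SimpleGraph.edgeSet_mono h) hc (Set.toFinite _)

theorem Contains.card_edgeSet_le {α β : Type*} [Finite α] {G : SimpleGraph α} {H : SimpleGraph β}
    (h : Contains G H) : Nat.card H.edgeSet ≤ Nat.card G.edgeSet := by
  obtain ⟨f, hf⟩ := h
  rw [← card_edgeSet_map H f]
  exact card_edgeSet_mono (Contains.map_le hf)

/-- If any two distinct vertices of degree less than `d` are adjacent, then the graph has at least
`d * (n - d) / 2` edges. -/
theorem card_edgeSet_ge_of_low_degree_adj {n d : ℕ} (H : SimpleGraph (Fin n))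
    (h : ∀ u v, u ≠ v → (H.neighborSet u).ncard < d → (H.neighborSet v).ncard < d → H.Adj u v) :
    d * (n - d) ≤ 2 * Nat.card H.edgeSet := by
  classical
  have hdeg : ∀ v, (H.neighborSet v).ncard = H.degree v := fun v => by
    rw [Set.ncard_eq_toFinset_card', ← SimpleGraph.card_neighborFinset_eq_degree]; rfl
  simp only [hdeg] at h
  have hsum := H.sum_degrees_eq_twice_card_edges
  have hE : Nat.card H.edgeSet = H.edgeFinset.card := by
    rw [Nat.card_eq_fintype_card, SimpleGraph.edgeFinset_card]
  rw [hE, ← hsum]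
  set L := Finset.univ.filter fun v => H.degree v < d with hL
  have hLd : L.card ≤ d := by
    rcases L.eq_empty_or_nonempty with h0 | ⟨v, hv⟩
    · simp [h0]
    · have hv' : H.degree v < d := by simpa [hL] using hv
      have hsub : L.erase v ⊆ H.neighborFinset v := by
        intro u hu
        rw [Finset.mem_erase] at hu
        rw [SimpleGraph.mem_neighborFinset]
        exact h v u hu.1.symm hv' (by simpa [hL] using hu.2)
      have := Finset.card_le_card hsub
      rw [Finset.card_erase_of_mem hv, SimpleGraph.card_neighborFinset_eq_degree] at this
      omega
  have hc : n - d ≤ Lᶜ.card := by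
    rw [Finset.card_compl, Fintype.card_fin]; omega
  calc d * (n - d) ≤ d * Lᶜ.card := Nat.mul_le_mul_left _ hc
    _ = ∑ v ∈ Lᶜ, d := by rw [Finset.sum_const, smul_eq_mul, mul_comm]
    _ ≤ ∑ v ∈ Lᶜ, H.degree v := Finset.sum_le_sum fun v hv => by simpa [hL] using hv
    _ ≤ ∑ v, H.degree v := Finset.sum_le_sum_of_subset (Finset.subset_univ _)

/-- If a graph whose non-isolated vertices have degree at least `d + 1` embeds in `H` plus the edge
`uv` where `u`, `v` have degree less than `d` in `H`, then it embeds in `H`. -/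
theorem Contains.of_sup_edge_of_low_degree {α β : Type*} [Finite α] {H : SimpleGraph α}
    {K : SimpleGraph β} {d : ℕ} {u v : α}
    (hK : ∀ x y, K.Adj x y → d + 1 ≤ (K.neighborSet x).ncard)
    (hu : (H.neighborSet u).ncard < d) (hv : (H.neighborSet v).ncard < d)
    (h : Contains (H ⊔ SimpleGraph.fromEdgeSet {s(u, v)}) K) : Contains H K := by
  obtain ⟨f, hf⟩ := h
  have key : ∀ p q : α, s(p, q) = s(u, v) → (H.neighborSet p).ncard < d →
      ∀ x y, K.Adj x y → f x ≠ p := by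
    rintro p q hpq hp x y hxy rfl
    have hsub : f '' K.neighborSet x ⊆ insert q (H.neighborSet (f x)) := by
      rintro _ ⟨z, hz, rfl⟩
      have := hf x z hz
      rw [SimpleGraph.sup_adj, SimpleGraph.fromEdgeSet_adj, Set.mem_singleton_iff, ← hpq] at this
      rcases this with h | ⟨h, -⟩
      · exact Or.inr h
      · exact Or.inl (Sym2.congr_right.1 h)
    have h1 := Set.ncard_le_ncard hsub (Set.toFinite _)
    rw [Set.ncard_image_of_injective _ f.injective] at h1
    have h2 := Set.ncard_insert_le q (H.neighborSet (f x))
    have h3 := hK x y hxy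
    omega
  refine ⟨f, fun a b hab => ?_⟩
  rcases hf a b hab with h | h
  · exact h
  · rw [SimpleGraph.fromEdgeSet_adj, Set.mem_singleton_iff, Sym2.eq_iff] at h
    rcases h.1 with h | h
    · exact absurd h.1 (key u v rfl hu a b hab)
    · exact absurd h.1 (key v u Sym2.eq_swap hv a b hab)

/-- A sequence of graphs `G n` on `n` vertices, none containing an earlier one and with all
non-isolated vertices of large degree, is the sequence of optimal saturated graphs of a family. -/
theorem exists_family_of_sequence (c N : ℕ) (s : ℕ → ℕ) (G : ∀ n, SimpleGraph (Fin n))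
    (hpos : ∀ n, N ≤ n → 0 < s n) (hle : ∀ n, N ≤ n → s n ≤ c * n)
    (hcard : ∀ n, N ≤ n → Nat.card (G n).edgeSet = s n)
    (hdeg : ∀ n, N ≤ n → ∀ x y, (G n).Adj x y → 2 * c + 2 ≤ ((G n).neighborSet x).ncard)
    (hnot : ∀ i n, N ≤ i → i < n → ¬ Contains (G n) (G i)) :
    ∃ 𝓕 : GraphFam, 𝓕.Nonempty ∧ (∀ F ∈ 𝓕, 1 ≤ Nat.card F.2.edgeSet) ∧
      ∀ᶠ n : ℕ in atTop, sat n 𝓕 = s n := by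
  let 𝓕 : GraphFam := {F | (N ≤ F.1 ∧ G F.1 < F.2) ∨ ∃ i, N ≤ i ∧ i < F.1 ∧ Contains F.2 (G i)}
  have hmem : ∀ F ∈ 𝓕, ∃ i, N ≤ i ∧ i ≤ F.1 ∧ Contains F.2 (G i) := by
    rintro F (⟨h1, h2⟩ | ⟨i, h1, h2, h3⟩)
    · exact ⟨F.1, h1, le_rfl, Contains.of_le h2.le⟩
    · exact ⟨i, h1, h2.le, h3⟩
  refine ⟨𝓕, ⟨⟨N + 1, ⊤⟩, Or.inr ⟨N, le_rfl, Nat.lt_succ_self N, ?_⟩⟩, ?_, ?_⟩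
  · exact ⟨Fin.castSuccEmb, fun a b h => by simpa using h.ne⟩
  · intro F hF
    obtain ⟨i, hi, -, h⟩ := hmem F hF
    have := h.card_edgeSet_le
    have := hpos i hi
    have := hcard i hi
    omega
  · filter_upwards [eventually_ge_atTop N, eventually_ge_atTop ((2 * c + 1) * (2 * c + 1))]
      with n hn hn'
    have hGsat : FamSaturated 𝓕 (G n) := by
      constructor
      · rintro ⟨k, F⟩ hF hcon
        have hkn := hcon.card_vertices_le
        rcases hF with ⟨h1, h2⟩ | ⟨i, h1, h2, h3⟩
        · rcases hkn.lt_or_eq with h | rfl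
          · exact hnot k n h1 h (hcon.trans (Contains.of_le h2.le))
          · exact h2.ne (eq_of_le_of_card_edgeSet_le h2.le hcon.card_edgeSet_le)
        · exact hnot i n h1 (h2.trans_le hkn) (hcon.trans h3)
      · intro u v huv hadj
        refine ⟨⟨n, G n ⊔ SimpleGraph.fromEdgeSet {s(u, v)}⟩, Or.inl ⟨hn, ?_⟩,
          Contains.of_le le_rfl⟩
        refine lt_of_le_of_ne le_sup_left fun h => hadj ?_
        dsimp only at h
        rw [h]
        simp [huv]
    have hmin : ∀ H : SimpleGraph (Fin n), FamSaturated 𝓕 H → s n ≤ Nat.card H.edgeSet := by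
      intro H hH
      by_contra! hlt
      have hlow := card_edgeSet_ge_of_low_degree_adj (d := 2 * c + 1) H <| by
        intro u v huv hu hv
        by_contra hadj
        obtain ⟨F, hF, hcon⟩ := hH.2 u v huv hadj
        obtain ⟨i, hi, hiF, hFi⟩ := hmem F hF
        have hin : i ≤ n := hiF.trans hcon.card_vertices_le
        have hHi := (hcon.trans hFi).of_sup_edge_of_low_degree (hdeg i hi) hu hv
        rcases hin.lt_or_eq with h | rfl
        · exact hH.1 ⟨n, H⟩ (Or.inr ⟨i, hi, h, hHi⟩) (Contains.of_le le_rfl)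
        · have := hHi.card_edgeSet_le
          rw [hcard i hi] at this
          omega
      have hs := hle n hn
      obtain ⟨r, rfl⟩ := Nat.exists_eq_add_of_le hn'
      have h1 : 2 * c + 1 ≤ (2 * c + 1) * (2 * c + 1) + r := by nlinarith
      zify [h1] at *
      nlinarith
    refine le_antisymm (Nat.sInf_le ⟨G n, hGsat, hcard n hn⟩) ?_
    refine le_csInf ⟨_, G n, hGsat, rfl⟩ ?_
    rintro m ⟨H, hH, rfl⟩
    exact hmin H hH

/-- The strong product of a cycle on `ZMod k` with a complete graph on `q` vertices. -/
def thickCycle (k q : ℕ) : SimpleGraph (ZMod k × Fin q) where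
  Adj x y := x ≠ y ∧ (y.1 = x.1 ∨ y.1 = x.1 + 1 ∨ x.1 = y.1 + 1)
  symm.symm x y h := by
    refine ⟨h.1.symm, ?_⟩
    rcases h.2 with h | h | h
    · exact Or.inl h.symm
    · exact Or.inr (Or.inr h)
    · exact Or.inr (Or.inl h)
  loopless.irrefl x h := h.1 rfl

theorem thickCycle_ncard_neighborSet {k q : ℕ} (hk : 3 ≤ k) (x : ZMod k × Fin q) :
    ((thickCycle k q).neighborSet x).ncard = 3 * q - 1 := by
  classical
  have : NeZero k := ⟨by omega⟩
  have : Fact (1 < k) := ⟨by omega⟩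
  have h2 : (2 : ZMod k) ≠ 0 := by
    intro h
    have := (ZMod.natCast_eq_zero_iff 2 k).1 (by exact_mod_cast h)
    have := Nat.le_of_dvd (by norm_num) this
    omega
  have hset : (thickCycle k q).neighborSet x =
      ↑((({x.1, x.1 + 1, x.1 - 1} : Finset (ZMod k)) ×ˢ (Finset.univ : Finset (Fin q))).erase x) := by
    ext y
    simp only [SimpleGraph.mem_neighborSet, thickCycle, Finset.coe_erase, Set.mem_sdiff,
      Finset.mem_coe, Finset.mem_product, Finset.mem_insert, Finset.mem_singleton,
      Finset.mem_univ, and_true, Set.mem_singleton_iff, eq_sub_iff_add_eq,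
      eq_comm (a := x.1) (b := y.1 + 1)]
    rw [and_comm, ne_comm]
  have hcard : ({x.1, x.1 + 1, x.1 - 1} : Finset (ZMod k)).card = 3 := by
    rw [Finset.card_eq_three]
    refine ⟨_, _, _, ?_, ?_, ?_, rfl⟩
    · simp
    · intro h
      have : (1 : ZMod k) = 0 := by linear_combination h
      exact one_ne_zero this
    · intro h
      apply h2
      linear_combination h
  rw [hset, Set.ncard_coe_finset, Finset.card_erase_of_mem (by simp), Finset.card_product, hcard,
    Finset.card_univ, Fintype.card_fin]

theorem thickCycle_connected {k q : ℕ} (hk : 3 ≤ k) (S : Set (ZMod k × Fin q)) (hS : S.Nonempty)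
    (hclosed : ∀ x y, x ∈ S → (thickCycle k q).Adj x y → y ∈ S) : S = Set.univ := by
  have : NeZero k := ⟨by omega⟩
  have : Fact (1 < k) := ⟨by omega⟩
  obtain ⟨⟨x, a⟩, hx⟩ := hS
  have hfib : ∀ y b c, (y, b) ∈ S → (y, c) ∈ S := by
    intro y b c h
    by_cases hbc : b = c
    · rwa [← hbc]
    · exact hclosed _ _ h ⟨by simpa using hbc, Or.inl rfl⟩
  have hstep : ∀ j : ℕ, (x + j, a) ∈ S := by
    intro j
    induction j with
    | zero => simpa using hx
    | succ j ih =>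
      refine hclosed _ _ ih ⟨?_, Or.inr (Or.inl ?_)⟩
      · simp
      · push_cast; ring
  ext ⟨y, b⟩
  simp only [Set.mem_univ, iff_true]
  refine hfib y a b ?_
  have := hstep (y - x).val
  rwa [ZMod.natCast_zmod_val, add_sub_cancel] at this

/-- The bipartite graph on `X ⊕ Y` with the given set of edges. -/
def bipartiteOf {X Y : Type*} (A : Set (X × Y)) : SimpleGraph (X ⊕ Y) :=
  SimpleGraph.fromEdgeSet ((fun p : X × Y => s(Sum.inl p.1, Sum.inr p.2)) '' A)

theorem bipartiteOf_adj_inl_inr {X Y : Type*} (A : Set (X × Y)) (x : X) (y : Y) :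
    (bipartiteOf A).Adj (Sum.inl x) (Sum.inr y) ↔ (x, y) ∈ A := by
  simp [bipartiteOf]

theorem bipartiteOf_not_adj_inl {X Y : Type*} (A : Set (X × Y)) (x y : X) :
    ¬ (bipartiteOf A).Adj (Sum.inl x) (Sum.inl y) := by
  simp [bipartiteOf]

theorem bipartiteOf_not_adj_inr {X Y : Type*} (A : Set (X × Y)) (x y : Y) :
    ¬ (bipartiteOf A).Adj (Sum.inr x) (Sum.inr y) := by
  simp [bipartiteOf]

theorem bipartiteOf_injective {X Y : Type*} :
    Function.Injective (bipartiteOf : Set (X × Y) → SimpleGraph (X ⊕ Y)) := by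
  intro A B h
  ext ⟨x, y⟩
  rw [← bipartiteOf_adj_inl_inr, h, bipartiteOf_adj_inl_inr]

theorem card_edgeSet_bipartiteOf {X Y : Type*} (A : Set (X × Y)) :
    Nat.card (bipartiteOf A).edgeSet = A.ncard := by
  have hset : (bipartiteOf A).edgeSet =
      (fun p : X × Y => s(Sum.inl p.1, Sum.inr p.2)) '' A := by
    rw [bipartiteOf, SimpleGraph.edgeSet_fromEdgeSet, sdiff_eq_left, Set.disjoint_left]
    rintro _ ⟨p, -, rfl⟩ h
    simp at h
  rw [hset, Nat.card_image_of_injective]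
  · rfl
  · rintro ⟨a, b⟩ ⟨c, d⟩ h
    simpa using h

theorem bipartiteOf_triangleFree {X Y : Type*} (A : Set (X × Y)) (a b c : X ⊕ Y)
    (hab : (bipartiteOf A).Adj a b) (hac : (bipartiteOf A).Adj a c) :
    ¬ (bipartiteOf A).Adj b c := by
  rcases a with a | a <;> rcases b with b | b <;> rcases c with c | c <;>
    simp_all [bipartiteOf_not_adj_inl, bipartiteOf_not_adj_inr]

/-- The disjoint union of a bipartite graph and two thick cycles. -/
abbrev markedGraph {X Y : Type*} (q k l : ℕ) (A : Set (X × Y)) :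
    SimpleGraph ((X ⊕ Y) ⊕ ((ZMod k × Fin q) ⊕ (ZMod l × Fin q))) :=
  bipartiteOf A ⊕g (thickCycle k q ⊕g thickCycle l q)

/-- A thick cycle embedded in another one of the same thickness has the same length. -/
theorem eq_of_contains_thickCycle {k l q : ℕ} (hk : 3 ≤ k) (hl : 3 ≤ l) (hq : 0 < q)
    (h : Contains (thickCycle l q) (thickCycle k q)) : k = l := by
  have : NeZero k := ⟨by omega⟩
  have : NeZero l := ⟨by omega⟩
  obtain ⟨f, hf⟩ := h
  have hrange : Set.range f = Set.univ := by
    refine thickCycle_connected hl _ ⟨f (0, ⟨0, hq⟩), Set.mem_range_self _⟩ ?_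
    rintro _ y ⟨x, rfl⟩ hxy
    have hsub : f '' (thickCycle k q).neighborSet x ⊆ (thickCycle l q).neighborSet (f x) := by
      rintro _ ⟨z, hz, rfl⟩
      exact hf _ _ hz
    have heq := Set.eq_of_subset_of_ncard_le hsub (by
      rw [Set.ncard_image_of_injective _ f.injective, thickCycle_ncard_neighborSet hk,
        thickCycle_ncard_neighborSet hl]) (Set.toFinite _)
    have : y ∈ f '' (thickCycle k q).neighborSet x := heq ▸ hxy
    exact Set.image_subset_range _ _ this
  have hbij : Function.Bijective f := ⟨f.injective, Set.range_eq_univ.1 hrange⟩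
  have hc := Fintype.card_of_bijective hbij
  simp only [Fintype.card_prod, ZMod.card, Fintype.card_fin] at hc
  exact Nat.eq_of_mul_eq_mul_right hq hc

/-- A thick cycle embedded in a disjoint union, with a vertex mapped to the first summand, is
embedded in the first summand. -/
theorem contains_inl_of_thickCycle {α β : Type*} {k q : ℕ} (hk : 3 ≤ k) {G : SimpleGraph α}
    {H : SimpleGraph β} (f : ZMod k × Fin q ↪ α ⊕ β)
    (hf : ∀ a b, (thickCycle k q).Adj a b → (G ⊕g H).Adj (f a) (f b)) {x : ZMod k × Fin q}
    {a : α} (hx : f x = Sum.inl a) :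
    ∃ g : ZMod k × Fin q ↪ α, (∀ a b, (thickCycle k q).Adj a b → G.Adj (g a) (g b)) ∧
      ∀ y, f y = Sum.inl (g y) := by
  have huniv : {y | ∃ a, f y = Sum.inl a} = Set.univ := by
    refine thickCycle_connected hk _ ⟨x, a, hx⟩ ?_
    rintro y z ⟨b, hb⟩ hyz
    have hadj := hf y z hyz
    rw [hb] at hadj
    rcases hz : f z with c | c
    · exact ⟨c, hz⟩
    · rw [hz] at hadj
      simp at hadj
  have hall : ∀ y, ∃ a, f y = Sum.inl a := Set.eq_univ_iff_forall.1 huniv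
  choose g hg using hall
  refine ⟨⟨g, fun y z h => f.injective (by rw [hg, hg, h])⟩, fun y z hyz => ?_, hg⟩
  have := hf y z hyz
  rw [hg, hg] at this
  exact SimpleGraph.sum_adj_inl.1 this

theorem contains_sum_thickCycle {α β : Type*} {k q : ℕ} (hk : 3 ≤ k) (hq : 0 < q)
    {G : SimpleGraph α} {H : SimpleGraph β} (h : Contains (G ⊕g H) (thickCycle k q)) :
    Contains G (thickCycle k q) ∨ Contains H (thickCycle k q) := by
  obtain ⟨f, hf⟩ := h
  rcases hx : f (0, ⟨0, hq⟩) with a | a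
  · obtain ⟨g, hg, -⟩ := contains_inl_of_thickCycle hk f hf hx
    exact Or.inl ⟨g, hg⟩
  · obtain ⟨g, hg, -⟩ := contains_inl_of_thickCycle (G := H) (H := G) (a := a) hk
      (f.trans (Equiv.sumComm α β).toEmbedding) (fun y z hyz => by
        have := hf y z hyz
        rcases hy : f y with c | c <;> rcases hz : f z with d | d <;> simp_all)
      (x := (0, ⟨0, hq⟩)) (by simp [hx])
    exact Or.inr ⟨g, hg⟩

theorem eq_or_eq_of_markedGraph_contains {X Y : Type*} {q k l r : ℕ} {A : Set (X × Y)}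
    (hk : 3 ≤ k) (hl : 3 ≤ l) (hr : 3 ≤ r) (hq : 3 ≤ q)
    (h : Contains (markedGraph q k l A) (thickCycle r q)) : r = k ∨ r = l := by
  rcases contains_sum_thickCycle hr (by omega) h with h | h
  · obtain ⟨f, hf⟩ := h
    refine absurd ?_ (bipartiteOf_triangleFree A (f (0, ⟨0, by omega⟩)) (f (0, ⟨1, by omega⟩))
      (f (0, ⟨2, by omega⟩)) (hf _ _ ?_) (hf _ _ ?_))
    · exact hf _ _ ⟨by simp, Or.inl rfl⟩
    · exact ⟨by simp, Or.inl rfl⟩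
    · exact ⟨by simp, Or.inl rfl⟩
  · rcases contains_sum_thickCycle hr (by omega) h with h | h
    · exact Or.inl (eq_of_contains_thickCycle hr hk (by omega) h)
    · exact Or.inr (eq_of_contains_thickCycle hr hl (by omega) h)

theorem Contains.sum_left {α β : Type*} (G : SimpleGraph α) (H : SimpleGraph β) :
    Contains (G ⊕g H) G :=
  ⟨Function.Embedding.inl, fun _ _ h => by simpa using h⟩

theorem Contains.sum_right {α β : Type*} (G : SimpleGraph α) (H : SimpleGraph β) :
    Contains (G ⊕g H) H :=
  ⟨Function.Embedding.inr, fun _ _ h => by simpa using h⟩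

theorem card_edgeSet_sum {α β : Type*} [Finite α] [Finite β] (G : SimpleGraph α)
    (H : SimpleGraph β) :
    Nat.card (G ⊕g H).edgeSet = Nat.card G.edgeSet + Nat.card H.edgeSet := by
  rw [Nat.card_congr SimpleGraph.edgeSetSumEquiv, Nat.card_sum]

theorem sum_min_degree {α β : Type*} [Finite α] [Finite β] {G : SimpleGraph α}
    {H : SimpleGraph β} {t : ℕ} (hG : ∀ x, t ≤ (G.neighborSet x).ncard)
    (hH : ∀ x, t ≤ (H.neighborSet x).ncard) (x : α ⊕ β) :
    t ≤ ((G ⊕g H).neighborSet x).ncard := by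
  rcases x with x | x
  · refine (hG x).trans ?_
    rw [← Set.ncard_image_of_injective _ (Sum.inl_injective (α := α) (β := β))]
    refine Set.ncard_le_ncard ?_ (Set.toFinite _)
    rintro _ ⟨y, hy, rfl⟩
    simpa using hy
  · refine (hH x).trans ?_
    rw [← Set.ncard_image_of_injective _ (Sum.inr_injective (α := α) (β := β))]
    refine Set.ncard_le_ncard ?_ (Set.toFinite _)
    rintro _ ⟨y, hy, rfl⟩
    simpa using hy

theorem sum_ncard_neighborSet {α : Type*} [Fintype α] (G : SimpleGraph α) :
    ∑ x, (G.neighborSet x).ncard = 2 * Nat.card G.edgeSet := by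
  classical
  rw [Nat.card_eq_fintype_card, ← SimpleGraph.edgeFinset_card, ← G.sum_degrees_eq_twice_card_edges]
  refine Finset.sum_congr rfl fun v _ => ?_
  rw [Set.ncard_eq_toFinset_card', ← SimpleGraph.card_neighborFinset_eq_degree]
  rfl

theorem card_edgeSet_thickCycle_le {k q : ℕ} (hk : 3 ≤ k) :
    Nat.card (thickCycle k q).edgeSet ≤ 3 * q ^ 2 * k := by
  have : NeZero k := ⟨by omega⟩
  have h := sum_ncard_neighborSet (thickCycle k q)
  simp only [thickCycle_ncard_neighborSet hk, Finset.sum_const, Finset.card_univ,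
    Fintype.card_prod, ZMod.card, Fintype.card_fin, smul_eq_mul] at h
  have h1 : k * q * (3 * q - 1) ≤ k * q * (3 * q) := Nat.mul_le_mul_left _ (Nat.sub_le _ _)
  nlinarith

/-- The subset of a grid consisting of all cells in the first `t` rows or columns together with
the given set of cells outside of them. -/
def framedSet (t v : ℕ) (B : Finset (Fin v × Fin v)) : Set ((Fin t ⊕ Fin v) × (Fin t ⊕ Fin v)) :=
  (Set.range (Prod.map Sum.inr Sum.inr))ᶜ ∪ Prod.map Sum.inr Sum.inr '' (B : Set (Fin v × Fin v))

theorem mem_framedSet_inr_inr {t v : ℕ} {B : Finset (Fin v × Fin v)} (i j : Fin v) :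
    (Sum.inr i, Sum.inr j) ∈ framedSet t v B ↔ (i, j) ∈ B := by
  simp [framedSet]

theorem mem_framedSet_inl_left {t v : ℕ} {B : Finset (Fin v × Fin v)} (i : Fin t)
    (y : Fin t ⊕ Fin v) : (Sum.inl i, y) ∈ framedSet t v B := by
  simp [framedSet]

theorem mem_framedSet_inl_right {t v : ℕ} {B : Finset (Fin v × Fin v)} (i : Fin t)
    (x : Fin t ⊕ Fin v) : (x, Sum.inl i) ∈ framedSet t v B := by
  simp [framedSet]

theorem framedSet_injective (t v : ℕ) : Function.Injective (framedSet t v) := by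
  intro B C h
  ext ⟨i, j⟩
  rw [← mem_framedSet_inr_inr (t := t), h, mem_framedSet_inr_inr]

theorem ncard_framedSet (t v : ℕ) (B : Finset (Fin v × Fin v)) :
    (framedSet t v B).ncard = (t + v) ^ 2 - v ^ 2 + B.card := by
  have hinj : Function.Injective
      (Prod.map Sum.inr Sum.inr : Fin v × Fin v → (Fin t ⊕ Fin v) × (Fin t ⊕ Fin v)) :=
    Sum.inr_injective.prodMap Sum.inr_injective
  rw [framedSet, Set.ncard_union_eq _ (Set.toFinite _) (Set.toFinite _), Set.ncard_compl,
    Set.ncard_image_of_injective _ hinj, ← Set.image_univ, Set.ncard_image_of_injective _ hinj,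
    Set.ncard_univ, Set.ncard_coe_finset]
  · simp [sq]
  · exact Set.disjoint_left.2 fun x hx hx' => hx (Set.image_subset_range _ _ hx')

theorem bipartiteOf_framedSet_min_degree (t v : ℕ) (B : Finset (Fin v × Fin v))
    (x : (Fin t ⊕ Fin v) ⊕ (Fin t ⊕ Fin v)) :
    t ≤ ((bipartiteOf (framedSet t v B)).neighborSet x).ncard := by
  have key : ∀ f : Fin t ↪ (Fin t ⊕ Fin v) ⊕ (Fin t ⊕ Fin v),
      (∀ i, (bipartiteOf (framedSet t v B)).Adj x (f i)) →
      t ≤ ((bipartiteOf (framedSet t v B)).neighborSet x).ncard := by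
    intro f hf
    calc t = (Set.range f).ncard := by
          rw [← Set.image_univ, Set.ncard_image_of_injective _ f.injective, Set.ncard_univ,
            Nat.card_eq_fintype_card, Fintype.card_fin]
      _ ≤ _ := Set.ncard_le_ncard (by rintro _ ⟨i, rfl⟩; exact hf i) (Set.toFinite _)
  rcases x with x | x
  · refine key (Function.Embedding.inl.trans Function.Embedding.inr) fun i => ?_
    exact (bipartiteOf_adj_inl_inr _ _ _).2 (mem_framedSet_inl_right i x)
  · refine key (Function.Embedding.inl.trans Function.Embedding.inl) fun i => ?_
    exact ((bipartiteOf_adj_inl_inr _ _ _).2 (mem_framedSet_inl_left i x)).symm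

/-- From a finite set of graphs on `V` with equally many edges one can extract a sequence, of
length at least the size of the set divided by `|V|!`, of graphs not containing each other. -/
theorem exists_not_contains_sequence {V : Type*} [Fintype V] (𝒜 : Finset (SimpleGraph V)) (m : ℕ)
    (h𝒜 : ∀ G ∈ 𝒜, Nat.card G.edgeSet = m) :
    ∃ g : ℕ → SimpleGraph V, ∀ j, j * (Fintype.card V).factorial < 𝒜.card →
      g j ∈ 𝒜 ∧ ∀ i, i * (Fintype.card V).factorial < 𝒜.card → i ≠ j →
        ¬ Contains (g j) (g i) := by
  classical
  let r : Setoid (SimpleGraph V) :=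
    { r := fun G H => Nonempty (G ≃g H)
      iseqv := ⟨fun G => ⟨SimpleGraph.Iso.refl⟩, fun ⟨e⟩ => ⟨e.symm⟩,
        fun ⟨e⟩ ⟨e'⟩ => ⟨e'.comp e⟩⟩ }
  let cl : SimpleGraph V → Quotient r := Quotient.mk r
  have hcard : 𝒜.card ≤ (Fintype.card V).factorial * (𝒜.image cl).card := by
    refine Finset.card_le_mul_card_image _ _ fun a ha => ?_
    obtain ⟨G, -, rfl⟩ := Finset.mem_image.1 ha
    rw [← Fintype.card_perm, ← Finset.card_univ]
    refine (Finset.card_le_card ?_).trans (Finset.card_image_le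
      (f := fun σ : Equiv.Perm V => G.map σ.toEmbedding))
    intro H hH
    obtain ⟨e⟩ : Nonempty (G ≃g H) := Quotient.exact (Finset.mem_filter.1 hH).2.symm
    refine Finset.mem_image.2 ⟨e.toEquiv, Finset.mem_univ _, ?_⟩
    ext a b
    rw [SimpleGraph.map_adj]
    constructor
    · rintro ⟨x, y, hxy, rfl, rfl⟩
      exact e.map_rel_iff.2 hxy
    · intro hab
      exact ⟨e.symm a, e.symm b, e.symm.map_rel_iff.2 hab, e.apply_symm_apply a,
        e.apply_symm_apply b⟩
  have hrep : ∀ a : 𝒜.image cl, ∃ G ∈ 𝒜, cl G = a := fun a => Finset.mem_image.1 a.2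
  choose rep hrep𝒜 hrepcl using hrep
  have hlt : ∀ j, j * (Fintype.card V).factorial < 𝒜.card → j < (𝒜.image cl).card := by
    intro j hj
    by_contra! h
    have := Nat.mul_le_mul_left (Fintype.card V).factorial h
    rw [mul_comm j] at hj
    omega
  let e := (𝒜.image cl).equivFin
  refine ⟨fun j => if h : j < (𝒜.image cl).card then rep (e.symm ⟨j, h⟩) else ⊥, fun j hj => ?_⟩
  have hj' := hlt j hj
  simp only [dif_pos hj']
  refine ⟨hrep𝒜 _, fun i hi hij hcon => ?_⟩
  have hi' := hlt i hi
  simp only [dif_pos hi'] at hcon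
  obtain ⟨f, hf⟩ := hcon
  have heq := eq_of_le_of_card_edgeSet_le (Contains.map_le hf)
    (by rw [card_edgeSet_map, h𝒜 _ (hrep𝒜 _), h𝒜 _ (hrep𝒜 _)])
  let σ : V ≃ V := Equiv.ofBijective f (Finite.injective_iff_bijective.1 f.injective)
  have hiso : rep (e.symm ⟨i, hi'⟩) ≃g rep (e.symm ⟨j, hj'⟩) :=
    { toEquiv := σ
      map_rel_iff' := by
        intro a b
        rw [← heq]
        exact SimpleGraph.map_adj_apply (f := f) }
  have h1 : cl (rep (e.symm ⟨i, hi'⟩)) = cl (rep (e.symm ⟨j, hj'⟩)) := Quotient.sound ⟨hiso⟩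
  rw [hrepcl, hrepcl] at h1
  have h2 := e.symm.injective (Subtype.ext h1)
  exact hij (by simpa using h2)

theorem exists_marked_sequence (t v q k l m : ℕ) (hk : 3 ≤ k) (hl : 3 ≤ l) (hq : 3 ≤ q)
    (htq : t ≤ q) (hm : 3 * q ^ 2 * (k + l) + ((t + v) ^ 2 - v ^ 2) ≤ m) :
    ∃ (V : Type) (_ : Fintype V) (g : ℕ → SimpleGraph V) (e : ℕ),
      Fintype.card V = 2 * (t + v) + (k + l) * q ∧
      m ≤ e + (3 * q ^ 2 * (k + l) + ((t + v) ^ 2 - v ^ 2)) ∧ e ≤ m ∧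
      ∀ j, j * (Fintype.card V).factorial < (v ^ 2).choose e →
        Nat.card (g j).edgeSet = m ∧ (∀ x, t ≤ ((g j).neighborSet x).ncard) ∧
        Contains (g j) (thickCycle k q) ∧ Contains (g j) (thickCycle l q) ∧
        (∀ r, 3 ≤ r → Contains (g j) (thickCycle r q) → r = k ∨ r = l) ∧
        ∀ i, i * (Fintype.card V).factorial < (v ^ 2).choose e → i ≠ j →
          ¬ Contains (g j) (g i) := by
  classical
  have : NeZero k := ⟨by omega⟩
  have : NeZero l := ⟨by omega⟩
  set μ := Nat.card (thickCycle k q).edgeSet + Nat.card (thickCycle l q).edgeSet with hμ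
  have hμle : μ ≤ 3 * q ^ 2 * (k + l) := by
    rw [mul_add]
    exact add_le_add (card_edgeSet_thickCycle_le hk) (card_edgeSet_thickCycle_le hl)
  set b := (t + v) ^ 2 - v ^ 2 with hb
  let F : Finset (Fin v × Fin v) → SimpleGraph (((Fin t ⊕ Fin v) ⊕ (Fin t ⊕ Fin v)) ⊕
      ((ZMod k × Fin q) ⊕ (ZMod l × Fin q))) := fun B => markedGraph q k l (framedSet t v B)
  have hF : Function.Injective F := by
    intro B C h
    refine framedSet_injective t v (bipartiteOf_injective ?_)
    ext x y
    rw [← SimpleGraph.sum_adj_inl (H := thickCycle k q ⊕g thickCycle l q),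
      ← SimpleGraph.sum_adj_inl (H := thickCycle k q ⊕g thickCycle l q)]
    exact iff_of_eq (congrArg (fun G => G.Adj (Sum.inl x) (Sum.inl y)) h)
  let 𝒜 := ((Finset.univ : Finset (Fin v × Fin v)).powersetCard (m - μ - b)).image F
  have h𝒜card : 𝒜.card = (v ^ 2).choose (m - μ - b) := by
    rw [Finset.card_image_of_injective _ hF, Finset.card_powersetCard, Finset.card_univ,
      Fintype.card_prod, Fintype.card_fin, sq]
  have h𝒜 : ∀ G ∈ 𝒜, Nat.card G.edgeSet = m := by
    intro G hG
    obtain ⟨B, hB, rfl⟩ := Finset.mem_image.1 hG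
    have hBc := (Finset.mem_powersetCard.1 hB).2
    rw [card_edgeSet_sum, card_edgeSet_sum, card_edgeSet_bipartiteOf, ncard_framedSet, hBc]
    omega
  obtain ⟨g, hg⟩ := exists_not_contains_sequence 𝒜 m h𝒜
  refine ⟨_, inferInstance, g, m - μ - b, ?_, by omega, by omega, ?_⟩
  · simp only [Fintype.card_sum, Fintype.card_prod, ZMod.card, Fintype.card_fin]
    ring
  rw [← h𝒜card]
  intro j hj
  obtain ⟨hgj, hnot⟩ := hg j hj
  refine ⟨h𝒜 _ hgj, ?_⟩
  obtain ⟨B, -, hB⟩ := Finset.mem_image.1 hgj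
  have hthick : ∀ r, 3 ≤ r → ∀ x, t ≤ ((thickCycle r q).neighborSet x).ncard := by
    intro r hr x
    rw [thickCycle_ncard_neighborSet hr]
    omega
  refine ⟨?_, ?_, ?_, ?_, hnot⟩ <;> rw [← hB]
  · exact sum_min_degree (bipartiteOf_framedSet_min_degree t v B)
      (sum_min_degree (hthick k hk) (hthick l hl))
  · exact (Contains.sum_right _ _).trans (Contains.sum_left _ _)
  · exact (Contains.sum_right _ _).trans (Contains.sum_right _ _)
  · exact fun r hr h => eq_or_eq_of_markedGraph_contains hk hl hr hq h

theorem Contains.of_map {α α' β β' : Type*} {G : SimpleGraph β} {H : SimpleGraph β'}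
    (e : β ↪ α) (e' : β' ↪ α') (hG : ∀ x, ∃ y, G.Adj x y)
    (h : Contains (H.map e') (G.map e)) : Contains H G := by
  obtain ⟨f, hf⟩ := h
  have hx : ∀ x, ∃ x', e' x' = f (e x) := by
    intro x
    obtain ⟨y, hxy⟩ := hG x
    obtain ⟨x', y', -, h, -⟩ := (SimpleGraph.map_adj ..).1
      (hf _ _ ((SimpleGraph.map_adj_apply (f := e)).2 hxy))
    exact ⟨x', h⟩
  choose p hp using hx
  refine ⟨⟨p, fun x y hxy => e.injective (f.injective ?_)⟩, fun x y hxy => ?_⟩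
  · rw [← hp, ← hp, hxy]
  · have := hf _ _ ((SimpleGraph.map_adj_apply (f := e)).2 hxy)
    rw [← hp, ← hp] at this
    exact (SimpleGraph.map_adj_apply (f := e')).1 this

theorem unpair_add_le_two_mul_sqrt (m : ℕ) : m.unpair.1 + m.unpair.2 ≤ 2 * Nat.sqrt m := by
  have h := Nat.max_sq_add_min_le_pair m.unpair.1 m.unpair.2
  rw [Nat.pair_unpair] at h
  have h1 : max m.unpair.1 m.unpair.2 ≤ Nat.sqrt m := Nat.le_sqrt'.2 (by omega)
  have := le_max_left m.unpair.1 m.unpair.2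
  have := le_max_right m.unpair.1 m.unpair.2
  omega

theorem eventually_mul_log_le_sqrt (c : ℝ) :
    ∀ᶠ m : ℕ in atTop, c * Real.log m ≤ √(m : ℝ) := by
  have h := (isLittleO_log_rpow_atTop (r := 1 / 2) (by norm_num)).bound
    (c := 1 / (|c| + 1)) (by positivity)
  filter_upwards [tendsto_natCast_atTop_atTop.eventually h, eventually_ge_atTop 1] with m hm hm1
  have hM : (1 : ℝ) ≤ m := by exact_mod_cast hm1
  have hL : 0 ≤ Real.log m := Real.log_nonneg hM
  rw [Real.norm_of_nonneg hL, ← Real.sqrt_eq_rpow, Real.norm_of_nonneg (Real.sqrt_nonneg _),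
    one_div, inv_mul_eq_div, le_div_iff₀ (by positivity)] at hm
  calc c * Real.log m ≤ (|c| + 1) * Real.log m := by
        gcongr
        linarith [le_abs_self c]
    _ ≤ _ := by linarith

theorem eventually_add_sqrt_le_div_log (c₁ c₂ : ℝ) (h₂ : 0 ≤ c₂) :
    ∀ᶠ m : ℕ in atTop, c₁ * √(m : ℝ) + c₂ ≤ m / Real.log m := by
  filter_upwards [eventually_mul_log_le_sqrt (c₁ + c₂), eventually_ge_atTop 2] with m hm hm1
  have hM : (2 : ℝ) ≤ m := by exact_mod_cast hm1
  have hL : 0 < Real.log m := Real.log_pos (by linarith)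
  have hsq : √(m : ℝ) * √(m : ℝ) = m := Real.mul_self_sqrt (by linarith)
  have h1 : 1 ≤ √(m : ℝ) := Real.one_le_sqrt.2 (by linarith)
  rw [le_div_iff₀ hL]
  calc (c₁ * √(m : ℝ) + c₂) * Real.log m ≤ (c₁ * √(m : ℝ) + c₂ * √(m : ℝ)) * Real.log m := by
        gcongr
        nlinarith
    _ = √(m : ℝ) * ((c₁ + c₂) * Real.log m) := by ring
    _ ≤ √(m : ℝ) * √(m : ℝ) := by gcongr
    _ = m := hsq

theorem pow_le_choose_of_add_le {N e m : ℕ} {ρ : ℝ} (hρ : 0 ≤ ρ) (he : e ≤ m) (hm : 0 < m)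
    (h : ρ * m + m ≤ N) : ρ ^ e ≤ (N.choose e : ℝ) := by
  refine le_trans ?_ (Nat.pow_le_choose e N)
  have hm' : (0 : ℝ) < m := by exact_mod_cast hm
  rw [le_div_iff₀ (by positivity)]
  have hfac : (e.factorial : ℝ) ≤ (m : ℝ) ^ e := by
    exact_mod_cast (Nat.factorial_le_pow e).trans (Nat.pow_le_pow_left he e)
  have hsub : ρ * m ≤ ((N + 1 - e : ℕ) : ℝ) := by
    have h1 : (N : ℝ) ≤ ((N + 1 - e : ℕ) : ℝ) + m := by
      exact_mod_cast (by omega : N ≤ (N + 1 - e) + m)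
    linarith
  calc ρ ^ e * e.factorial ≤ ρ ^ e * (m : ℝ) ^ e := by gcongr
    _ = (ρ * m) ^ e := (mul_pow _ _ _).symm
    _ ≤ _ := by gcongr

theorem eventually_exists_many_marked (t q : ℕ) :
    ∀ᶠ m : ℕ in atTop, ∃ v : ℕ,
      3 * q ^ 2 * (2 * m.unpair.1 + 4 + (2 * m.unpair.2 + 5)) + ((t + v) ^ 2 - v ^ 2) ≤ m ∧
      ∀ e, m ≤ e + (3 * q ^ 2 * (2 * m.unpair.1 + 4 + (2 * m.unpair.2 + 5)) +
          ((t + v) ^ 2 - v ^ 2)) → e ≤ m →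
        ∀ j : ℕ, (j : ℝ) ≤ Real.exp (m * (Real.log m - 3 * Real.log (Real.log m))) →
          j * (2 * (t + v) + (2 * m.unpair.1 + 4 + (2 * m.unpair.2 + 5)) * q).factorial <
            (v ^ 2).choose e := by
  have hlog : Tendsto (fun m : ℕ => Real.log m) atTop atTop :=
    Real.tendsto_log_atTop.comp tendsto_natCast_atTop_atTop
  have hloglog : Tendsto (fun m : ℕ => Real.log (Real.log m)) atTop atTop :=
    Real.tendsto_log_atTop.comp hlog
  filter_upwards [eventually_add_sqrt_le_div_log (12 * q ^ 2) (27 * q ^ 2 + t ^ 2) (by positivity),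
    eventually_add_sqrt_le_div_log (4 * q) (9 * q + 2 * t) (by positivity),
    eventually_add_sqrt_le_div_log 0 2 (by norm_num),
    eventually_mul_log_le_sqrt 3, hlog.eventually_ge_atTop (2 * t + 3),
    hloglog.eventually_gt_atTop (3 + (2 * t + 1) + Real.log 8), eventually_ge_atTop 2]
    with m hE hV h2 h3 hL hLL hm2
  set P := 2 * m.unpair.1 + 4 + (2 * m.unpair.2 + 5) with hP
  set M : ℝ := (m : ℝ) with hM
  set L := Real.log M with hLdef
  have hM2 : (2 : ℝ) ≤ M := by rw [hM]; exact_mod_cast hm2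
  have ht0 : (0 : ℝ) ≤ t := Nat.cast_nonneg t
  have hL0 : 0 < L := by linarith
  have hPle : (P : ℝ) ≤ 4 * √M + 9 := by
    have h1 : P ≤ 4 * Nat.sqrt m + 9 := by
      have := unpair_add_le_two_mul_sqrt m
      omega
    have h2 : (P : ℝ) ≤ 4 * (Nat.sqrt m : ℝ) + 9 := by exact_mod_cast h1
    have h3 : (Nat.sqrt m : ℝ) ≤ √M := Real.nat_sqrt_le_real_sqrt
    linarith
  have h9 : 9 * L ^ 2 ≤ M := by
    have hsq : √M * √M = M := Real.mul_self_sqrt (by linarith)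
    nlinarith
  set Q := M / L with hQ
  have hQ2 : 2 ≤ Q := by simpa using h2
  have hQL : Q * L = M := div_mul_cancel₀ _ hL0.ne'
  let v := ⌊Q⌋₊
  have hv1 : (v : ℝ) ≤ Q := Nat.floor_le (by linarith)
  have hv2 : Q / 2 ≤ v := by
    have := Nat.lt_floor_add_one Q
    have : Q < v + 1 := this
    linarith
  have hbase : (t + v) ^ 2 - v ^ 2 = 2 * t * v + t ^ 2 := by
    rw [Nat.sub_eq_iff_eq_add (Nat.pow_le_pow_left (by omega) 2)]
    ring
  set E := 3 * q ^ 2 * P + ((t + v) ^ 2 - v ^ 2) with hEdef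
  have hEle : (E : ℝ) ≤ (2 * t + 1) * Q := by
    rw [hEdef, hbase]
    push_cast
    have h1 : (3 * q ^ 2 * P : ℝ) ≤ 3 * q ^ 2 * (4 * √M + 9) := by gcongr
    have h2 : (2 * t * v : ℝ) ≤ 2 * t * Q := by gcongr
    linarith
  have hEM : (2 * t + 1) * Q ≤ M := by
    rw [← hQL, mul_comm Q]
    gcongr
    linarith
  refine ⟨v, ?_, fun e he1 he2 j hj => ?_⟩
  · have : (E : ℝ) ≤ (m : ℝ) := hEle.trans hEM
    exact_mod_cast this
  set W := 2 * (t + v) + P * q with hW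
  have hWle : (W : ℝ) ≤ 3 * Q := by
    rw [hW]
    push_cast
    have h1 : (P * q : ℝ) ≤ (4 * √M + 9) * q := by gcongr
    linarith
  have hWM : (W : ℝ) ≤ M := by
    refine hWle.trans ?_
    rw [← hQL, mul_comm Q]
    gcongr
    linarith
  have hfac : (W.factorial : ℝ) ≤ Real.exp (3 * M) := by
    calc (W.factorial : ℝ) ≤ (W : ℝ) ^ W := by exact_mod_cast Nat.factorial_le_pow W
      _ ≤ M ^ W := by gcongr
      _ = Real.exp (W * L) := by
          rw [← Real.rpow_natCast, Real.rpow_def_of_pos (by linarith), mul_comm]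
      _ ≤ Real.exp (3 * M) := by
          refine Real.exp_le_exp.2 ?_
          rw [← hQL, ← mul_assoc]
          gcongr
  set ρ := M / (8 * L ^ 2) with hρ
  have hρ1 : 1 ≤ ρ := by
    rw [hρ, one_le_div (by positivity)]
    linarith [sq_nonneg L]
  have hlogρ : Real.log ρ = L - Real.log 8 - 2 * Real.log L := by
    rw [hρ, Real.log_div (by linarith) (by positivity), Real.log_mul (by norm_num) (by positivity),
      Real.log_pow]
    push_cast
    ring
  have hlogρ0 : 0 ≤ Real.log ρ := Real.log_nonneg hρ1
  have hN : ρ * m + m ≤ ((v ^ 2 : ℕ) : ℝ) := by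
    have h1 : ρ * M = Q ^ 2 / 8 := by
      rw [hρ, hQ]
      field_simp
    have h2 : M ≤ Q ^ 2 / 8 := by
      rw [← h1]
      exact le_mul_of_one_le_left (by linarith) hρ1
    have h3 : Q ^ 2 / 4 ≤ (v : ℝ) ^ 2 := by
      calc Q ^ 2 / 4 = (Q / 2) ^ 2 := by ring
        _ ≤ (v : ℝ) ^ 2 := by gcongr
    rw [← hM, h1]
    push_cast
    linarith
  have hchoose := pow_le_choose_of_add_le (by linarith) he2 (by omega) hN
  have hpow : Real.exp ((M - (2 * t + 1) * Q) * Real.log ρ) ≤ ρ ^ e := by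
    rw [← Real.rpow_natCast, Real.rpow_def_of_pos (by linarith), mul_comm (Real.log ρ)]
    refine Real.exp_le_exp.2 (mul_le_mul_of_nonneg_right ?_ hlogρ0)
    have : M ≤ (e : ℝ) + E := by rw [hM]; exact_mod_cast he1
    linarith
  have hexp : M * (L - 3 * Real.log L) + 3 * M < (M - (2 * t + 1) * Q) * Real.log ρ := by
    rw [hlogρ]
    have h8 : 0 ≤ Real.log 8 := Real.log_nonneg (by norm_num)
    have hx : 0 ≤ (2 * t + 1) * Q * (Real.log 8 + 2 * Real.log L) := by
      have : 0 ≤ Real.log L := by linarith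
      positivity
    have hy : M * (3 + (2 * t + 1) + Real.log 8) < M * Real.log L := by gcongr
    have hz : (2 * t + 1) * Q * L = (2 * t + 1) * M := by rw [mul_assoc, hQL]
    have hexpand : (M - (2 * t + 1) * Q) * (L - Real.log 8 - 2 * Real.log L) =
        M * L - M * Real.log 8 - 2 * (M * Real.log L) - (2 * t + 1) * Q * L +
          (2 * t + 1) * Q * (Real.log 8 + 2 * Real.log L) := by ring
    rw [hexpand, hz]
    linarith
  have hfinal : (j : ℝ) * W.factorial < ((v ^ 2).choose e : ℝ) := by
    calc (j : ℝ) * W.factorial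
        ≤ Real.exp (M * (L - 3 * Real.log L)) * Real.exp (3 * M) := by gcongr
      _ = Real.exp (M * (L - 3 * Real.log L) + 3 * M) := (Real.exp_add _ _).symm
      _ < Real.exp ((M - (2 * t + 1) * Q) * Real.log ρ) := Real.exp_lt_exp.2 hexp
      _ ≤ ρ ^ e := hpow
      _ ≤ _ := hchoose
  exact_mod_cast hfinal

/-- The growth condition on the sequence guarantees that `n` is at most the number of available
graphs with `s n` edges. -/
theorem eventually_le_exp_of_growth (s : ℕ → ℤ)
    (h : Tendsto (fun n : ℕ =>
        ((s n : ℝ) - Real.log n / Real.log (Real.log n)) * (Real.log (Real.log n)) ^ 2 /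
          (Real.log n * Real.log (Real.log (Real.log n)))) atTop atTop) (B : ℝ) :
    ∀ᶠ n : ℕ in atTop, B ≤ s n ∧
      (n : ℝ) ≤ Real.exp (s n * (Real.log (s n) - 3 * Real.log (Real.log (s n)))) := by
  have hx : Tendsto (fun n : ℕ => Real.log n) atTop atTop :=
    Real.tendsto_log_atTop.comp tendsto_natCast_atTop_atTop
  have hy : Tendsto (fun n : ℕ => Real.log (Real.log n)) atTop atTop :=
    Real.tendsto_log_atTop.comp hx
  have hz : Tendsto (fun n : ℕ => Real.log (Real.log (Real.log n))) atTop atTop :=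
    Real.tendsto_log_atTop.comp hy
  have hzy : ∀ᶠ n : ℕ in atTop, Real.log (Real.log (Real.log n)) ≤ Real.log (Real.log n) / 20 := by
    filter_upwards [hy.eventually (Real.isLittleO_log_id_atTop.bound
      (c := 1 / 20) (by norm_num)), hy.eventually_gt_atTop 0, hz.eventually_gt_atTop 0]
      with n hn h1 h2
    rw [Real.norm_of_nonneg h2.le, id, Real.norm_of_nonneg h1.le] at hn
    linarith
  filter_upwards [h.eventually_ge_atTop 5, hx.eventually_gt_atTop 0,
    hy.eventually_ge_atTop (max 6 (2 * B)), hz.eventually_gt_atTop 0, hzy, eventually_gt_atTop 0]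
    with n hn hx0 hy6 hz0 hzy hn0
  set x := Real.log n with hxdef
  set y := Real.log x with hydef
  set z := Real.log y with hzdef
  have hy6' : 6 ≤ y := (le_max_left _ _).trans hy6
  have hyB : 2 * B ≤ y := (le_max_right _ _).trans hy6
  have hy0 : 0 < y := by linarith
  have hs : x / y * (1 + 5 * (z / y)) ≤ s n := by
    rw [le_div_iff₀ (by positivity)] at hn
    have h1 : 5 * (x * z) / y ^ 2 ≤ s n - x / y := by
      rw [div_le_iff₀ (by positivity)]
      exact hn
    have h2 : x / y * (1 + 5 * (z / y)) = x / y + 5 * (x * z) / y ^ 2 := by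
      field_simp
    linarith
  have hxy : 0 < x / y := by positivity
  have hζ0 : 0 < z / y := by positivity
  have hζ : z / y ≤ 1 / 20 := by
    rw [div_le_iff₀ hy0]
    linarith
  have hsxy : x / y ≤ s n := le_trans (by nlinarith) hs
  have hs0 : (0 : ℝ) < s n := hxy.trans_le hsxy
  set u := Real.log (s n) with hudef
  have hu : y - z ≤ u := by
    have := Real.log_le_log hxy hsxy
    rwa [Real.log_div hx0.ne' hy0.ne'] at this
  have hu0 : 3 ≤ y - z := by linarith
  have hlogu : Real.log u ≤ z + (u - (y - z)) / 3 := by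
    have h1 : Real.log (y - z) ≤ z := Real.log_le_log (by linarith) (by linarith)
    have h2 : Real.log u - Real.log (y - z) ≤ u / (y - z) - 1 := by
      rw [← Real.log_div (by linarith) (by linarith)]
      exact Real.log_le_sub_one_of_pos (div_pos (by linarith) (by linarith))
    have h3 : u / (y - z) - 1 ≤ (u - (y - z)) / 3 := by
      rw [div_sub_one (by linarith)]
      exact div_le_div_of_nonneg_left (by linarith) (by norm_num) hu0
    linarith
  have hmain : y * (1 - 4 * (z / y)) ≤ u - 3 * Real.log u := by
    have : y * (1 - 4 * (z / y)) = y - 4 * z := by field_simp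
    linarith
  constructor
  · have := Real.log_le_sub_one_of_pos hs0
    linarith
  · rw [← Real.log_le_iff_le_exp (by exact_mod_cast hn0)]
    calc x ≤ x * ((1 + 5 * (z / y)) * (1 - 4 * (z / y))) := by
          refine le_mul_of_one_le_right hx0.le ?_
          nlinarith
      _ = (x / y * (1 + 5 * (z / y))) * (y * (1 - 4 * (z / y))) := by
          field_simp
      _ ≤ s n * (u - 3 * Real.log u) := by
          refine mul_le_mul hs hmain ?_ hs0.le
          have : 0 ≤ 1 - 4 * (z / y) := by linarith
          positivity

/-- For every large `m` there are many graphs with `m` edges and large minimum degree, none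
containing another one and with thick cycles identifying `m`. -/
theorem exists_identified_graphs (t : ℕ) :
    ∃ q m₀ : ℕ, ∀ m, ∃ (V : Type) (_ : Fintype V) (g : ℕ → SimpleGraph V), m₀ ≤ m →
      ∀ j : ℕ, (j : ℝ) ≤ Real.exp (m * (Real.log m - 3 * Real.log (Real.log m))) →
        Nat.card (g j).edgeSet = m ∧ (∀ x, t ≤ ((g j).neighborSet x).ncard) ∧
        Contains (g j) (thickCycle (2 * m.unpair.1 + 4) q) ∧
        Contains (g j) (thickCycle (2 * m.unpair.2 + 5) q) ∧
        (∀ r, 3 ≤ r → Contains (g j) (thickCycle r q) →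
          r = 2 * m.unpair.1 + 4 ∨ r = 2 * m.unpair.2 + 5) ∧
        ∀ i : ℕ, (i : ℝ) ≤ Real.exp (m * (Real.log m - 3 * Real.log (Real.log m))) → i ≠ j →
          ¬ Contains (g j) (g i) := by
  obtain ⟨m₀, hm₀⟩ := eventually_atTop.1 (eventually_exists_many_marked t (t + 3))
  refine ⟨t + 3, m₀, fun m => ?_⟩
  by_cases hm : m₀ ≤ m
  · obtain ⟨v, hv, hcount⟩ := hm₀ m hm
    obtain ⟨V, hV, g, e, hVcard, he1, he2, hg⟩ := exists_marked_sequence t v (t + 3) _ _ m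
      (by omega) (by omega) (by omega) (by omega) hv
    have hj := hcount e he1 he2
    rw [← hVcard] at hj
    refine ⟨V, hV, g, fun _ j hjle => ?_⟩
    obtain ⟨h1, h2, h3, h4, h5, h6⟩ := hg j (hj j hjle)
    exact ⟨h1, h2, h3, h4, h5, fun i hi => h6 i (hj i hi)⟩
  · exact ⟨Empty, inferInstance, fun _ => ⊥, fun h => absurd h hm⟩

/-- Every integer sequence with `log n / log log n + ω(log n · log log log n / (log log n)²) ≤ s_n
= O(n)` is eventually equal to `sat(·,𝓕)` for some family `𝓕`. -/
theorem stmt7 (s : ℕ → ℤ)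
    (h1 : ∃ C : ℝ, ∀ n : ℕ, 1 ≤ n → (s n : ℝ) ≤ C * n)
    (h2 : Tendsto (fun n : ℕ =>
        ((s n : ℝ) - Real.log n / Real.log (Real.log n)) * (Real.log (Real.log n)) ^ 2 /
          (Real.log n * Real.log (Real.log (Real.log n)))) atTop atTop) :
    ∃ 𝓕 : GraphFam, 𝓕.Nonempty ∧ (∀ F ∈ 𝓕, 1 ≤ Nat.card F.2.edgeSet) ∧
      ∀ᶠ n : ℕ in atTop, (sat n 𝓕 : ℤ) = s n := by
  obtain ⟨C, hC⟩ := h1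
  obtain ⟨c, hc⟩ := exists_nat_ge C
  obtain ⟨q, m₀, hgraphs⟩ := exists_identified_graphs (2 * c + 2)
  choose V hV g hg using hgraphs
  obtain ⟨N, hN⟩ := eventually_atTop.1
    ((eventually_le_exp_of_growth s h2 (m₀ + 1)).and (eventually_ge_atTop 1))
  set σ : ℕ → ℕ := fun n => (s n).toNat with hσ
  have hσs : ∀ n, N ≤ n → ((σ n : ℕ) : ℤ) = s n := by
    intro n hn
    have h := (hN n hn).1.1
    have h' : (m₀ + 1 : ℤ) ≤ s n := by exact_mod_cast h
    exact Int.toNat_of_nonneg (by omega)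
  have hσr : ∀ n, N ≤ n → ((σ n : ℕ) : ℝ) = s n := fun n hn => by
    exact_mod_cast congrArg (Int.cast : ℤ → ℝ) (hσs n hn)
  have hσm : ∀ n, N ≤ n → m₀ + 1 ≤ σ n := by
    intro n hn
    have h := (hN n hn).1.1
    rw [← hσr n hn] at h
    exact_mod_cast h
  have hσc : ∀ n, N ≤ n → σ n ≤ c * n := by
    intro n hn
    have h := hC n (hN n hn).2
    rw [← hσr n hn] at h
    have h' : (σ n : ℝ) ≤ c * n := h.trans (by gcongr)
    exact_mod_cast h'
  have hexp : ∀ n, N ≤ n →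
      (n : ℝ) ≤ Real.exp (σ n * (Real.log (σ n) - 3 * Real.log (Real.log (σ n)))) := by
    intro n hn
    rw [hσr n hn]
    exact (hN n hn).1.2
  have hgood := fun n hn => hg (σ n) (by have := hσm n hn; omega) n (hexp n hn)
  have hemb : ∀ n, N ≤ n → Nonempty (V (σ n) ↪ Fin n) := by
    intro n hn
    refine Function.Embedding.nonempty_of_card_le ?_
    rw [Fintype.card_fin]
    obtain ⟨hcard, hdeg, -⟩ := hgood n hn
    have hsum := sum_ncard_neighborSet (g (σ n) n)
    rw [hcard] at hsum
    have hge : Fintype.card (V (σ n)) * (2 * c + 2) ≤ 2 * σ n := by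
      rw [← hsum, ← smul_eq_mul]
      exact Finset.card_nsmul_le_sum _ _ _ fun x _ => hdeg x
    have := hσc n hn
    by_contra! hlt
    nlinarith
  let G : ∀ n, SimpleGraph (Fin n) := fun n =>
    if hn : N ≤ n then (g (σ n) n).map (hemb n hn).some else ⊥
  have hG : ∀ n (hn : N ≤ n), G n = (g (σ n) n).map (hemb n hn).some := fun n hn => dif_pos hn
  obtain ⟨𝓕, hne, hedge, hsat⟩ := exists_family_of_sequence c N σ G
    (fun n hn => by have := hσm n hn; omega) hσc
    (fun n hn => by rw [hG n hn, card_edgeSet_map, (hgood n hn).1])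
    (by
      intro n hn x y hxy
      rw [hG n hn] at hxy ⊢
      obtain ⟨x', y', -, rfl, -⟩ := (SimpleGraph.map_adj ..).1 hxy
      refine ((hgood n hn).2.1 x').trans ?_
      rw [← Set.ncard_image_of_injective _ (hemb n hn).some.injective]
      refine Set.ncard_le_ncard ?_ (Set.toFinite _)
      rintro _ ⟨z, hz, rfl⟩
      exact SimpleGraph.map_adj_apply.2 hz)
    (by
      intro i n hi hin hcon
      have hn : N ≤ n := hi.trans hin.le
      rw [hG n hn, hG i hi] at hcon
      obtain ⟨-, hdeg, hk, hl, -⟩ := hgood i hi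
      obtain ⟨-, -, -, -, honly, hnot⟩ := hgood n hn
      have hcon' := hcon.of_map _ _ fun x =>
        Set.nonempty_of_ncard_ne_zero (s := (g (σ i) i).neighborSet x)
          (by have := hdeg x; omega)
      have h1 := honly _ (by omega) (hcon'.trans hk)
      have h2 := honly _ (by omega) (hcon'.trans hl)
      have heq : σ i = σ n := by
        rw [← Nat.pair_unpair (σ i), ← Nat.pair_unpair (σ n), Nat.pair_eq_pair]
        omega
      have hi' := hexp i hi
      rw [heq] at hcon' hi'
      exact hnot i hi' hin.ne hcon')
  refine ⟨𝓕, hne, hedge, ?_⟩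
  filter_upwards [hsat, eventually_ge_atTop N] with n hn hnN
  rw [hn, hσs n hnN]
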